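/- arXiv:2203.02663 — 3 statements merged into one kernel-verified Lean document; each statement's English description precedes it below -/
import Mathlib

section
/- (Theorem 2.1(b), transformation part.) Let q, r : ℝ → ℂ with r continuous, q continuously differentiable, and q·r Lebesgue integrable on every interval (−∞, x]. Define E(x) := exp((i/2)∫_{−∞}^x q(t)r(t) dt), p(x) := ((i/2)q'(x) + (1/4)q(x)²r(x))·E(x)^{−2}, and s(x) := r(x)·E(x)². Let ζ ∈ ℂ and λ := ζ². If (γ, ε) : ℝ → ℂ² is a differentiable pair satisfying the AKNS system γ'(x) = −iλ·γ(x) + p(x)·ε(x), ε'(x) = s(x)·γ(x) + iλ·ε(x) for all x, then the pair α(x) := E(x)·γ(x) − (i/2)·q(x)·E(x)^{−1}·ε(x), β(x) := ζ·E(x)^{−1}·ε(x) is a solution of system (1.1) with potentials q, r and spectral parameter ζ. -/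
open MeasureTheory

/-- The quantity E(x) = exp((i/2)∫_{-∞}^x q r) from (2.18). -/
noncomputable def Epot (q r : ℝ → ℂ) (x : ℝ) : ℂ :=
  Complex.exp ((Complex.I / 2) * ∫ t in Set.Iic x, q t * r t)

theorem Epot_hasDerivAt (q r : ℝ → ℂ) (hc : Continuous (fun t => q t * r t))
    (hqr : ∀ x : ℝ, IntegrableOn (fun t => q t * r t) (Set.Iic x)) (x : ℝ) :
    HasDerivAt (Epot q r) (Epot q r x * ((Complex.I / 2) * (q x * r x))) x := by
  have h1 : HasDerivAt (fun y => ∫ t in Set.Iic y, q t * r t) (q x * r x) x := by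
    have h2 : (fun y => ∫ t in Set.Iic y, q t * r t)
        = fun y => (∫ t in Set.Iic (0:ℝ), q t * r t) + ∫ t in (0:ℝ)..y, q t * r t := by
      funext y
      rw [← intervalIntegral.integral_Iic_sub_Iic (hqr 0) (hqr y)]
      ring
    rw [h2]
    exact (intervalIntegral.integral_hasDerivAt_right (hc.intervalIntegrable _ _)
      hc.stronglyMeasurable.stronglyMeasurableAtFilter hc.continuousAt).const_add _
  exact (h1.const_mul (Complex.I / 2)).cexp

/-- Theorem 2.1(b), transformation part: a solution (γ,ε) of the AKNS system (2.21)
with potentials p = ((i/2)q' + (1/4)q² r) E⁻², s = r E² is transformed into a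
solution of system (1.1) via α = E γ − (i/2) q E⁻¹ ε, β = ζ E⁻¹ ε. -/
theorem akns_ps_to_system11
    (q r q' : ℝ → ℂ)
    (hr : Continuous r)
    (hq : ∀ x : ℝ, HasDerivAt q (q' x) x)
    (hq' : Continuous q')
    (hqr : ∀ x : ℝ, IntegrableOn (fun t => q t * r t) (Set.Iic x))
    (ζ : ℂ) (γ ε : ℝ → ℂ)
    (hγ : ∀ x : ℝ, HasDerivAt γ
      (-Complex.I * ζ ^ 2 * γ x
        + (((Complex.I / 2) * q' x + (1 / 4) * (q x) ^ 2 * r x) / (Epot q r x) ^ 2) * ε x) x)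
    (hε : ∀ x : ℝ, HasDerivAt ε
      ((r x * (Epot q r x) ^ 2) * γ x + Complex.I * ζ ^ 2 * ε x) x) :
    ∀ x : ℝ,
      HasDerivAt (fun x => Epot q r x * γ x - (Complex.I / 2) * q x * (Epot q r x)⁻¹ * ε x)
        (-Complex.I * ζ ^ 2
            * (Epot q r x * γ x - (Complex.I / 2) * q x * (Epot q r x)⁻¹ * ε x)
          + ζ * q x * (ζ * (Epot q r x)⁻¹ * ε x)) x ∧
      HasDerivAt (fun x => ζ * (Epot q r x)⁻¹ * ε x)
        (ζ * r x * (Epot q r x * γ x - (Complex.I / 2) * q x * (Epot q r x)⁻¹ * ε x)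
          + Complex.I * ζ ^ 2 * (ζ * (Epot q r x)⁻¹ * ε x)) x := by
  intro x
  have hqc : Continuous q := continuous_iff_continuousAt.2 fun y => (hq y).continuousAt
  have hE := Epot_hasDerivAt q r (hqc.mul hr) hqr x
  have hne : Epot q r x ≠ 0 := Complex.exp_ne_zero _
  have hI := hE.fun_inv hne
  constructor
  · refine ((hE.fun_mul (hγ x)).fun_sub
      ((((hq x).const_mul (Complex.I / 2)).fun_mul hI).fun_mul (hε x))).congr_deriv ?_
    generalize Epot q r x = e at *
    field_simp
    ring_nf
    simp only [Complex.I_sq]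
    ring
  · refine ((hI.const_mul ζ).fun_mul (hε x)).congr_deriv ?_
    generalize Epot q r x = e at *
    field_simp
    ring
end

section
/- (Theorem 5.1, second Marchenko equation.) With the matrix triplet data (A, B, C), (Ā, B̄, C̄) and M, M̄, Γ(x), Ω, Ω̄, Ω̄' as in the context, fix x ∈ ℝ and assume Γ(x) is invertible. Define K̄₂(x, y) := −C·e^{iAx}·Γ(x)^{−1}·e^{iAy}·B for y ≥ x. Then for every y > x the reflectionless Marchenko equation holds: K̄₂(x, y) + Ω(x + y) − i·∫_x^∞∫_x^∞ K̄₂(x, z)·Ω̄'(z + s)·Ω(s + y) ds dz = 0. -/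
open MeasureTheory Matrix

/-- e^{iAt} for a complex square matrix A and real t. -/
noncomputable def eiA {n : ℕ} (A : Matrix (Fin n) (Fin n) ℂ) (t : ℝ) :
    Matrix (Fin n) (Fin n) ℂ :=
  NormedSpace.exp ((Complex.I * t) • A)

open scoped Matrix.Norms.Operator in
theorem eiA_add {n : ℕ} (A : Matrix (Fin n) (Fin n) ℂ) (s t : ℝ) :
    eiA A (s + t) = eiA A s * eiA A t := by
  unfold eiA
  rw [← Matrix.exp_add_of_commute]
  · congr 1
    rw [← add_smul]; push_cast; ring_nf
  · exact ((Commute.refl A).smul_left _).smul_right _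

theorem eiA_zero {n : ℕ} (A : Matrix (Fin n) (Fin n) ℂ) : eiA A 0 = 1 := by
  simp [eiA]

theorem eiA_neg {n : ℕ} (A : Matrix (Fin n) (Fin n) ℂ) (t : ℝ) :
    eiA A (-t) = eiA (-A) t := by
  simp [eiA]

open scoped Matrix.Norms.Operator in
theorem eiA_comm {n : ℕ} (A : Matrix (Fin n) (Fin n) ℂ) (t : ℝ) :
    A * eiA A t = eiA A t * A := by
  have h : Commute A (eiA A t) := by
    unfold eiA
    exact ((Commute.refl A).smul_right _).exp_right
  exact h

open scoped Matrix.Norms.Operator in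
theorem eiA_cont {n : ℕ} (A : Matrix (Fin n) (Fin n) ℂ) : Continuous (eiA A) := by
  unfold eiA
  exact NormedSpace.exp_continuous.comp (by fun_prop)

open scoped Matrix.Norms.Operator in
theorem eiA_mulVec {n : ℕ} (A : Matrix (Fin n) (Fin n) ℂ) (l : ℂ) (v : Fin n → ℂ)
    (hv : A *ᵥ v = l • v) :
    eiA A 1 *ᵥ v = Complex.exp (Complex.I * l) • v := by
  have hp : ∀ k : ℕ, (((Complex.I * (1:ℝ)) • A) ^ k) *ᵥ v = (Complex.I * l) ^ k • v := by
    intro k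
    induction k with
    | zero => simp
    | succ k ih =>
      rw [pow_succ', ← Matrix.mulVec_mulVec, ih, Matrix.mulVec_smul, Matrix.smul_mulVec, hv,
        smul_smul, smul_smul, pow_succ]
      congr 1
      push_cast; ring
  have h1 := NormedSpace.exp_series_hasSum_exp' (𝕂 := ℂ) ((Complex.I * (1:ℝ)) • A)
  let L : Matrix (Fin n) (Fin n) ℂ →ₗ[ℂ] (Fin n → ℂ) :=
    { toFun := fun X => X *ᵥ v
      map_add' := fun X Y => Matrix.add_mulVec X Y v
      map_smul' := fun c X => Matrix.smul_mulVec c X v }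
  have hL : Continuous L := L.continuous_of_finiteDimensional
  have h2 := h1.map L.toAddMonoidHom hL
  have h3 := NormedSpace.exp_series_hasSum_exp' (𝕂 := ℂ) (Complex.I * l)
  rw [← Complex.exp_eq_exp_ℂ] at h3
  have h4 := h3.smul_const v
  refine h2.unique ?_
  convert h4 using 1
  funext k
  change ((k.factorial : ℂ)⁻¹ • ((Complex.I * (1:ℝ)) • A) ^ k) *ᵥ v = _
  rw [Matrix.smul_mulVec, hp, smul_assoc]

theorem spec_eiA {n : ℕ} (A : Matrix (Fin n) (Fin n) ℂ) (μ : ℂ)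
    (hμ : μ ∈ spectrum ℂ (eiA A 1)) :
    ∃ l ∈ spectrum ℂ A, μ = Complex.exp (Complex.I * l) := by
  rw [← Matrix.spectrum_toLin', ← Module.End.hasEigenvalue_iff_mem_spectrum] at hμ
  set E := Matrix.toLin' (eiA A 1)
  have hinv : ∀ v ∈ Module.End.eigenspace E μ, Matrix.toLin' A v ∈ Module.End.eigenspace E μ := by
    intro v hv
    rw [Module.End.mem_eigenspace_iff] at hv ⊢
    simp only [E, Matrix.toLin'_apply] at hv ⊢
    rw [Matrix.mulVec_mulVec, ← eiA_comm, ← Matrix.mulVec_mulVec, hv, Matrix.mulVec_smul]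
  have hne : Nontrivial (Module.End.eigenspace E μ) := by
    rw [Submodule.nontrivial_iff_ne_bot]; exact hμ
  obtain ⟨l, hl⟩ := Module.End.exists_eigenvalue ((Matrix.toLin' A).restrict hinv)
  obtain ⟨w, hw⟩ := hl.exists_hasEigenvector
  have hw1 := hw.apply_eq_smul
  have hw2 : A *ᵥ (w : Fin n → ℂ) = l • (w : Fin n → ℂ) := by
    have := congrArg Subtype.val hw1
    simpa using this
  have hw0 : (w : Fin n → ℂ) ≠ 0 := by
    intro h; exact hw.2 (Subtype.ext h)
  refine ⟨l, ?_, ?_⟩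
  · rw [← Matrix.spectrum_toLin', ← Module.End.hasEigenvalue_iff_mem_spectrum]
    refine Module.End.hasEigenvalue_of_hasEigenvector (x := (w : Fin n → ℂ)) ⟨?_, hw0⟩
    rw [Module.End.mem_eigenspace_iff]; simpa using hw2
  · have h1 := eiA_mulVec A l w hw2
    have h2 := Module.End.mem_eigenspace_iff.1 w.2
    simp only [E, Matrix.toLin'_apply] at h2
    rw [h1] at h2
    exact (smul_left_injective ℂ hw0 h2).symm

theorem eiA_nat {n : ℕ} (A : Matrix (Fin n) (Fin n) ℂ) (s : ℝ) (k : ℕ) :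
    eiA A (k * s) = (eiA A s) ^ k := by
  induction k with
  | zero => simp [eiA_zero]
  | succ k ih => rw [pow_succ, ← ih, ← eiA_add]; congr 1; push_cast; ring

open scoped Matrix.Norms.Operator in
theorem exists_contract {n : ℕ} (A : Matrix (Fin n) (Fin n) ℂ)
    (hA : ∀ μ ∈ spectrum ℂ A, 0 < μ.im) : ∃ N : ℕ, 0 < N ∧ ‖eiA A N‖ < 1 := by
  rcases subsingleton_or_nontrivial (Matrix (Fin n) (Fin n) ℂ) with hs | hs
  · exact ⟨1, one_pos, by rw [Subsingleton.elim (eiA A _) 0]; simp⟩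
  have hr : spectralRadius ℂ (eiA A 1) < (1 : NNReal) := by
    apply spectrum.spectralRadius_lt_of_forall_lt
    intro k hk
    obtain ⟨l, hl, rfl⟩ := spec_eiA A k hk
    rw [← NNReal.coe_lt_coe, coe_nnnorm, Complex.norm_exp]
    simpa using hA l hl
  have ht := spectrum.pow_nnnorm_pow_one_div_tendsto_nhds_spectralRadius (eiA A 1)
  have he := (ht.eventually_lt_const hr).and (Filter.eventually_gt_atTop 0)
  obtain ⟨N, hN, hN0⟩ := he.exists
  refine ⟨N, hN0, ?_⟩
  have h1 : (eiA A N) = eiA A 1 ^ N := by rw [← eiA_nat]; simp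
  rw [h1]
  by_contra hcon
  push Not at hcon
  have : (1 : ENNReal) ≤ (‖eiA A 1 ^ N‖₊ : ENNReal) := by
    exact_mod_cast hcon
  exact absurd hN (not_lt.2 (by simpa using ENNReal.one_le_rpow this (by positivity)))

open scoped Matrix.Norms.Operator in
theorem eiA_decay {n : ℕ} (A : Matrix (Fin n) (Fin n) ℂ)
    (hA : ∀ μ ∈ spectrum ℂ A, 0 < μ.im) :
    ∃ K c : ℝ, 0 < c ∧ ∀ t : ℝ, 0 ≤ t → ‖eiA A t‖ ≤ K * Real.exp (-c * t) := by
  obtain ⟨N, hN, hlt⟩ := exists_contract A hA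
  have hN' : (0:ℝ) < N := by exact_mod_cast hN
  set q := max ‖eiA A N‖ (1/2) with hq
  have hq0 : 0 < q := lt_of_lt_of_le (by norm_num) (le_max_right _ _)
  have hq1 : q < 1 := max_lt hlt (by norm_num)
  obtain ⟨K, hK⟩ := (isCompact_Icc (a := (0:ℝ)) (b := N)).exists_bound_of_continuousOn
    (eiA_cont A).continuousOn
  have hK0 : 0 ≤ K := (norm_nonneg _).trans (hK 0 ⟨le_rfl, hN'.le⟩)
  have hlog : Real.log q < 0 := Real.log_neg hq0 hq1
  refine ⟨K * q⁻¹, -Real.log q / N, by apply div_pos <;> linarith, fun t ht => ?_⟩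
  set k := ⌊t / N⌋₊
  have hk1 : (k:ℝ) ≤ t / N := Nat.floor_le (by positivity)
  have hk2 : t / N < k + 1 := Nat.lt_floor_add_one _
  have hk1' : k * (N:ℝ) ≤ t := (le_div_iff₀ hN').1 hk1
  have hk2' : t < (k + 1) * (N:ℝ) := (div_lt_iff₀ hN').1 hk2
  have hb : ‖eiA A (t - k * N)‖ ≤ K := hK _ ⟨by linarith, by linarith⟩
  have hpow : ∀ j : ℕ, ‖eiA A N ^ j * eiA A (t - k * N)‖ ≤ q ^ j * K := by
    intro j
    induction j with
    | zero => simpa using hb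
    | succ j ih =>
      rw [pow_succ', mul_assoc, pow_succ', mul_assoc]
      exact (norm_mul_le _ _).trans (mul_le_mul (le_max_left _ _) ih (norm_nonneg _) hq0.le)
  have h1 : eiA A t = eiA A N ^ k * eiA A (t - k * N) := by
    rw [← eiA_nat, ← eiA_add]; congr 1; ring
  rw [h1]
  refine (hpow k).trans ?_
  have h2 : q ^ k ≤ q⁻¹ * Real.exp (-(-Real.log q / N) * t) := by
    have e1 : q ^ k = Real.exp (k * Real.log q) := by
      rw [Real.exp_nat_mul, Real.exp_log hq0]
    have e2 : q⁻¹ = Real.exp (-Real.log q) := by rw [Real.exp_neg, Real.exp_log hq0]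
    rw [e1, e2, ← Real.exp_add]
    apply Real.exp_le_exp.2
    have : -(-Real.log q / N) * t = Real.log q * (t / N) := by ring
    rw [this]; nlinarith
  calc q ^ k * K ≤ (q⁻¹ * Real.exp (-(-Real.log q / N) * t)) * K := by gcongr
    _ = _ := by ring

open scoped Matrix.Norms.Operator in
theorem entry_le {m n : ℕ} (X : Matrix (Fin m) (Fin n) ℂ) (i : Fin m) (j : Fin n) :
    ‖X i j‖ ≤ ‖X‖ := by
  have h := Matrix.linfty_opNNNorm_def X
  have : ‖X i j‖₊ ≤ ‖X‖₊ := by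
    rw [h]
    refine le_trans ?_ (Finset.le_sup (f := fun i => ∑ j, ‖X i j‖₊) (Finset.mem_univ i))
    exact Finset.single_le_sum (f := fun j => ‖X i j‖₊) (fun _ _ => zero_le) (Finset.mem_univ j)
  exact this

open scoped Matrix.Norms.Operator in
theorem entry_integrable {n m : ℕ} (A : Matrix (Fin n) (Fin n) ℂ)
    (hA : ∀ μ ∈ spectrum ℂ A, 0 < μ.im) (D : Matrix (Fin m) (Fin m) ℂ)
    (hD : ∀ μ ∈ spectrum ℂ D, 0 < μ.im) (R : Matrix (Fin n) (Fin m) ℂ) (i : Fin n) (j : Fin m) :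
    IntegrableOn (fun z : ℝ => (eiA A z * R * eiA D z) i j) (Set.Ioi 0) := by
  obtain ⟨K, c, hc, hK⟩ := eiA_decay A hA
  obtain ⟨K', c', hc', hK'⟩ := eiA_decay D hD
  have hcont : Continuous (fun z : ℝ => (eiA A z * R * eiA D z) i j) := by
    have h1 := eiA_cont A
    have h2 := eiA_cont D
    exact ((h1.matrix_mul continuous_const).matrix_mul h2).matrix_elem i j
  have hint : IntegrableOn (fun z : ℝ => K * ‖R‖ * K' * Real.exp (-(c + c') * z)) (Set.Ioi 0) :=
    (integrableOn_exp_mul_Ioi (by linarith) 0).const_mul _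
  refine Integrable.mono' hint hcont.aestronglyMeasurable ?_
  refine (ae_restrict_iff' measurableSet_Ioi).2 (Filter.Eventually.of_forall fun z hz => ?_)
  have hz : 0 ≤ z := le_of_lt hz
  have k1 := hK z hz
  have k2 := hK' z hz
  calc ‖(eiA A z * R * eiA D z) i j‖ ≤ ‖eiA A z * R * eiA D z‖ := entry_le _ _ _
    _ ≤ ‖eiA A z * R‖ * ‖eiA D z‖ := Matrix.linfty_opNorm_mul _ _
    _ ≤ (‖eiA A z‖ * ‖R‖) * ‖eiA D z‖ := by gcongr; exact Matrix.linfty_opNorm_mul _ _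
    _ ≤ ((K * Real.exp (-c * z)) * ‖R‖) * (K' * Real.exp (-c' * z)) := by
        gcongr
        exact mul_nonneg ((norm_nonneg _).trans k1) (norm_nonneg _)
    _ = K * ‖R‖ * K' * (Real.exp (-c * z) * Real.exp (-c' * z)) := by ring
    _ = _ := by rw [← Real.exp_add]; congr 2; ring

theorem integral_mul_mul {a b n m : ℕ} (P : Matrix (Fin a) (Fin n) ℂ) (Q : Matrix (Fin m) (Fin b) ℂ)
    (F : ℝ → Matrix (Fin n) (Fin m) ℂ) (S : Set ℝ)
    (hF : ∀ i j, IntegrableOn (fun z => F z i j) S)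
    (T : Matrix (Fin n) (Fin m) ℂ) (hT : ∀ i j, T i j = ∫ z in S, F z i j) (i : Fin a) (j : Fin b) :
    IntegrableOn (fun z => (P * F z * Q) i j) S ∧ ∫ z in S, (P * F z * Q) i j = (P * T * Q) i j := by
  simp only [Matrix.mul_apply, Finset.sum_mul]
  have h1 : ∀ k l, Integrable (fun z => P i l * F z l k * Q k j) (volume.restrict S) :=
    fun k l => ((hF l k).const_mul _).mul_const _
  refine ⟨integrable_finsetSum _ fun k _ => integrable_finsetSum _ fun l _ => h1 k l, ?_⟩
  rw [integral_finsetSum _ fun k _ => integrable_finsetSum _ fun l _ => h1 k l]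
  refine Finset.sum_congr rfl fun k _ => ?_
  rw [integral_finsetSum _ fun l _ => h1 k l]
  refine Finset.sum_congr rfl fun l _ => ?_
  rw [integral_mul_const, integral_const_mul, hT]

theorem shifted {n m : ℕ} (A : Matrix (Fin n) (Fin n) ℂ)
    (hA : ∀ μ ∈ spectrum ℂ A, 0 < μ.im) (D : Matrix (Fin m) (Fin m) ℂ)
    (hD : ∀ μ ∈ spectrum ℂ D, 0 < μ.im) (R T : Matrix (Fin n) (Fin m) ℂ)
    (hT : ∀ i j, T i j = ∫ z in Set.Ioi (0:ℝ), (eiA A z * R * eiA D z) i j) (x : ℝ) (i : Fin n)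
    (j : Fin m) :
    IntegrableOn (fun z : ℝ => (eiA A z * R * eiA D z) i j) (Set.Ioi x) ∧
    (eiA A x * T * eiA D x) i j = ∫ z in Set.Ioi x, (eiA A z * R * eiA D z) i j := by
  have h := integral_mul_mul (eiA A x) (eiA D x) (fun z => eiA A z * R * eiA D z) (Set.Ioi 0)
    (fun i j => entry_integrable A hA D hD R i j) T hT i j
  have e : ∀ z : ℝ, eiA A x * (eiA A z * R * eiA D z) * eiA D x
      = eiA A (z + x) * R * eiA D (z + x) := by
    intro z
    rw [add_comm z x, eiA_add A, add_comm x z, eiA_add D]; simp only [Matrix.mul_assoc]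
  simp only [e] at h
  have mp := measurePreserving_add_right (volume : Measure ℝ) x
  have me : MeasurableEmbedding (fun z : ℝ => z + x) := measurableEmbedding_addRight x
  have hpre : (fun z : ℝ => z + x) ⁻¹' (Set.Ioi x) = Set.Ioi 0 := by ext z; simp
  constructor
  · rw [← mp.integrableOn_comp_preimage me, hpre]; exact h.1
  · rw [← h.2, ← hpre]; exact mp.setIntegral_preimage_emb me (fun z => (eiA A z * R * eiA D z) i j) _

/-- Theorem 5.1, second Marchenko equation: the explicit kernel
K̄₂(x,y) = −C e^{iAx} Γ(x)⁻¹ e^{iAy} B solves the reflectionless Marchenko equation. -/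
theorem marchenko_solution_Kb2
    (𝒩 𝒩b : ℕ)
    (A : Matrix (Fin 𝒩) (Fin 𝒩) ℂ) (hA : ∀ μ ∈ spectrum ℂ A, 0 < μ.im)
    (B : Matrix (Fin 𝒩) (Fin 1) ℂ) (C : Matrix (Fin 1) (Fin 𝒩) ℂ)
    (Ab : Matrix (Fin 𝒩b) (Fin 𝒩b) ℂ) (hAb : ∀ μ ∈ spectrum ℂ Ab, μ.im < 0)
    (Bb : Matrix (Fin 𝒩b) (Fin 1) ℂ) (Cb : Matrix (Fin 1) (Fin 𝒩b) ℂ)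
    (M : Matrix (Fin 𝒩) (Fin 𝒩b) ℂ)
    (hM : ∀ i j, M i j = ∫ z in Set.Ioi (0 : ℝ), (eiA A z * B * Cb * eiA Ab (-z)) i j)
    (Mb : Matrix (Fin 𝒩b) (Fin 𝒩) ℂ)
    (hMb : ∀ i j, Mb i j = ∫ z in Set.Ioi (0 : ℝ), (eiA Ab (-z) * Bb * C * eiA A z) i j)
    (x : ℝ)
    (Γ : Matrix (Fin 𝒩) (Fin 𝒩) ℂ)
    (hΓ : Γ = 1 - eiA A x * M * Ab * eiA Ab (-(2 * x)) * Mb * eiA A x)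
    (hΓinv : IsUnit Γ)
    (Kb₂ : ℝ → ℂ)
    (hKb₂ : ∀ y : ℝ, x ≤ y →
      Kb₂ y = -((C * eiA A x * Γ⁻¹ * eiA A y * B) 0 0)) :
    ∀ y : ℝ, x < y →
      Kb₂ y + (C * eiA A (x + y) * B) 0 0
        - Complex.I * ∫ z in Set.Ioi x, ∫ s in Set.Ioi x,
            Kb₂ z * (-Complex.I * ((Cb * (Ab * eiA Ab (-(z + s))) * Bb) 0 0))
              * ((C * eiA A (s + y) * B) 0 0) = 0 := by
  intro y hy
  have hD : ∀ μ ∈ spectrum ℂ (-Ab), 0 < μ.im := by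
    intro μ hμ
    rw [← spectrum.neg_eq, Set.mem_neg] at hμ
    have := hAb _ hμ
    simpa using this
  have hF := shifted A hA (-Ab) hD (B * Cb) M
    (by intro i j; rw [hM]; simp only [eiA_neg, Matrix.mul_assoc]) x
  have hG := shifted (-Ab) hD A hA (Bb * C) Mb
    (by intro i j; rw [hMb]; simp only [eiA_neg, Matrix.mul_assoc]) x
  set T := eiA A x * M * eiA (-Ab) x with hTdef
  set Tb := eiA (-Ab) x * Mb * eiA A x with hTbdef
  have mul00 : ∀ (X Y : Matrix (Fin 1) (Fin 1) ℂ), X 0 0 * Y 0 0 = (X * Y) 0 0 := by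
    intro X Y; simp [Matrix.mul_apply]
  have inner : ∀ z ∈ Set.Ioi x, (∫ s in Set.Ioi x,
            Kb₂ z * (-Complex.I * ((Cb * (Ab * eiA Ab (-(z + s))) * Bb) 0 0))
              * ((C * eiA A (s + y) * B) 0 0)) =
      Complex.I * ((C * eiA A x * Γ⁻¹) * (eiA A z * (B * Cb) * eiA (-Ab) z)
        * (Ab * Tb * (eiA A y * B))) 0 0 := by
    intro z hz
    have h := (integral_mul_mul (Cb * Ab * eiA (-Ab) z) (eiA A y * B)
      (fun s => eiA (-Ab) s * (Bb * C) * eiA A s) (Set.Ioi x) (fun i j => (hG i j).1) Tb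
      (fun i j => (hG i j).2) 0 0).2
    have e : ∀ s : ℝ, Kb₂ z * (-Complex.I * ((Cb * (Ab * eiA Ab (-(z + s))) * Bb) 0 0))
              * ((C * eiA A (s + y) * B) 0 0) = (Kb₂ z * -Complex.I) *
        (Cb * Ab * eiA (-Ab) z * (eiA (-Ab) s * (Bb * C) * eiA A s) * (eiA A y * B)) 0 0 := by
      intro s
      rw [eiA_neg, eiA_add, eiA_add A s y, ← mul_assoc, mul_assoc (Kb₂ z * -Complex.I), mul00]
      simp only [Matrix.mul_assoc]
    simp only [e]
    rw [integral_const_mul, h, hKb₂ z (le_of_lt hz)]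
    have e2 : ∀ a b : ℂ, -a * -Complex.I * b = Complex.I * (a * b) := by intro a b; ring
    rw [e2, mul00]
    have hc : Ab * eiA (-Ab) z = eiA (-Ab) z * Ab := by
      rw [← eiA_neg]; exact eiA_comm _ _
    rw [Matrix.mul_assoc Cb, hc]
    simp only [Matrix.mul_assoc]
  rw [setIntegral_congr_fun measurableSet_Ioi inner, integral_const_mul,
    (integral_mul_mul (C * eiA A x * Γ⁻¹) (Ab * Tb * (eiA A y * B))
      (fun z => eiA A z * (B * Cb) * eiA (-Ab) z) (Set.Ioi x) (fun i j => (hF i j).1) T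
      (fun i j => (hF i j).2) 0 0).2, hKb₂ y hy.le]
  have hk : T * (Ab * Tb) = 1 - Γ := by
    have hc : Ab * eiA (-Ab) x = eiA (-Ab) x * Ab := by
      rw [← eiA_neg]; exact eiA_comm _ _
    rw [hΓ, hTdef, hTbdef, eiA_neg, two_mul, eiA_add]
    simp only [sub_sub_cancel, Matrix.mul_assoc]
    rw [← Matrix.mul_assoc Ab (eiA (-Ab) x), hc]
    simp only [Matrix.mul_assoc]
    rw [← Matrix.mul_assoc Ab (eiA (-Ab) x), hc]
    simp only [Matrix.mul_assoc]
    rw [← Matrix.mul_assoc Ab (eiA (-Ab) x), hc]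
    simp only [Matrix.mul_assoc]
  have hinv : Γ⁻¹ * Γ = 1 := Matrix.nonsing_inv_mul _ ((Matrix.isUnit_iff_isUnit_det _).1 hΓinv)
  have e3 : C * eiA A x * Γ⁻¹ * T * (Ab * Tb * (eiA A y * B)) =
      C * eiA A x * Γ⁻¹ * eiA A y * B - C * eiA A (x + y) * B := by
    have : C * eiA A x * Γ⁻¹ * T * (Ab * Tb * (eiA A y * B)) =
      C * eiA A x * (Γ⁻¹ * (T * (Ab * Tb))) * eiA A y * B := by simp only [Matrix.mul_assoc]
    rw [this, hk, Matrix.mul_sub, hinv, Matrix.mul_one, eiA_add]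
    simp only [Matrix.mul_sub, Matrix.sub_mul, Matrix.mul_one, Matrix.mul_assoc]
  rw [e3, Matrix.sub_apply, ← mul_assoc, Complex.I_mul_I]
  ring
end

section
/- (Example 6.3, verification that ψ̄ solves (1.1).) With q, r, art as in the context, let ζ ∈ ℂ with λ := ζ² ≠ i, and define ψ̄₁(ζ, x) := (−2(λ + 2i) − 3i·e^{6x}·(λ − i))·exp(−iλx − 2·art(1/3 − i·e^{6x})) / ((λ − i)·(2 + 3i·e^{6x})) and ψ̄₂(ζ, x) := 6ζ·exp(−iλx + 4x + 2·art(1/3 − i·e^{6x})) / ((λ − i)·(−4 + 3i·e^{6x})). Then for every x ∈ ℝ the pair (ψ̄₁(ζ,·), ψ̄₂(ζ,·)) is a solution of system (1.1) with potentials q, r and spectral parameter ζ: ∂ψ̄₁/∂x = −iζ²·ψ̄₁ + ζ·q(x)·ψ̄₂ and ∂ψ̄₂/∂x = ζ·r(x)·ψ̄₁ + iζ²·ψ̄₂. -/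
/-- Principal inverse hyperbolic tangent. -/
noncomputable def art (w : ℂ) : ℂ :=
  (Complex.log (1 + w) - Complex.log (1 - w)) / 2

/-- The potential q of Example 6.3. -/
noncomputable def qEx (x : ℝ) : ℂ :=
  18 / (3 * Complex.exp (6 * x) - 2 * Complex.I)
    * Complex.exp (2 * x - 4 * art (1 / 3 - Complex.I * Complex.exp (6 * x)))

/-- The potential r of Example 6.3. -/
noncomputable def rEx (x : ℝ) : ℂ :=
  12 / (3 * Complex.exp (6 * x) + 4 * Complex.I)
    * Complex.exp (4 * x + 4 * art (1 / 3 - Complex.I * Complex.exp (6 * x)))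

/-- The first component of the Jost solution ψ̄ of Example 6.3. -/
noncomputable def ψb₁Ex (ζ : ℂ) (x : ℝ) : ℂ :=
  (-2 * (ζ ^ 2 + 2 * Complex.I) - 3 * Complex.I * Complex.exp (6 * x) * (ζ ^ 2 - Complex.I))
    * Complex.exp (-Complex.I * ζ ^ 2 * x
      - 2 * art (1 / 3 - Complex.I * Complex.exp (6 * x)))
    / ((ζ ^ 2 - Complex.I) * (2 + 3 * Complex.I * Complex.exp (6 * x)))

/-- The second component of the Jost solution ψ̄ of Example 6.3. -/
noncomputable def ψb₂Ex (ζ : ℂ) (x : ℝ) : ℂ :=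
  6 * ζ * Complex.exp (-Complex.I * ζ ^ 2 * x + 4 * x
      + 2 * art (1 / 3 - Complex.I * Complex.exp (6 * x)))
    / ((ζ ^ 2 - Complex.I) * (-4 + 3 * Complex.I * Complex.exp (6 * x)))

lemma aux_A (x : ℝ) : 4 - 3 * Complex.I * Complex.exp (6 * x) ≠ 0 := by
  intro h
  have h2 := congrArg Complex.re h
  have : Complex.exp (6 * x) = ((Real.exp (6 * x) : ℝ) : ℂ) := by push_cast; rfl
  rw [this] at h2
  simp [-Complex.ofReal_exp] at h2

lemma aux_B (x : ℝ) : 2 + 3 * Complex.I * Complex.exp (6 * x) ≠ 0 := by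
  intro h
  have h2 := congrArg Complex.re h
  have : Complex.exp (6 * x) = ((Real.exp (6 * x) : ℝ) : ℂ) := by push_cast; rfl
  rw [this] at h2
  simp [-Complex.ofReal_exp] at h2

lemma aux_art (x : ℝ) : Complex.exp (2 * art (1 / 3 - Complex.I * Complex.exp (6 * x)))
    = (4 - 3 * Complex.I * Complex.exp (6 * x)) / (2 + 3 * Complex.I * Complex.exp (6 * x)) := by
  have hA := aux_A x
  have hB := aux_B x
  have hA2 : 4 - Complex.I * 3 * Complex.exp (6 * x) ≠ 0 := by rwa [mul_comm Complex.I 3]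
  have hB2 : 2 + Complex.I * 3 * Complex.exp (6 * x) ≠ 0 := by rwa [mul_comm Complex.I 3]
  have e1 : 1 + (1 / 3 - Complex.I * Complex.exp (6 * x))
      = (4 - 3 * Complex.I * Complex.exp (6 * x)) / 3 := by ring
  have e2 : 1 - (1 / 3 - Complex.I * Complex.exp (6 * x))
      = (2 + 3 * Complex.I * Complex.exp (6 * x)) / 3 := by ring
  unfold art
  rw [mul_div_cancel₀ _ (two_ne_zero), Complex.exp_sub, e1, e2,
    Complex.exp_log (div_ne_zero hA three_ne_zero), Complex.exp_log (div_ne_zero hB three_ne_zero)]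
  field_simp

lemma aux_psi1 (ζ : ℂ) (hζ : ζ ^ 2 ≠ Complex.I) (x : ℝ) : ψb₁Ex ζ x =
    (-2 * (ζ ^ 2 + 2 * Complex.I) - 3 * Complex.I * Complex.exp (6 * x) * (ζ ^ 2 - Complex.I))
    * Complex.exp (-Complex.I * ζ ^ 2 * x)
    / ((ζ ^ 2 - Complex.I) * (4 - 3 * Complex.I * Complex.exp (6 * x))) := by
  have hA := aux_A x
  have hB := aux_B x
  have hA2 : 4 - Complex.I * 3 * Complex.exp (6 * x) ≠ 0 := by rwa [mul_comm Complex.I 3]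
  have hB2 : 2 + Complex.I * 3 * Complex.exp (6 * x) ≠ 0 := by rwa [mul_comm Complex.I 3]
  have hz := sub_ne_zero.mpr hζ
  unfold ψb₁Ex
  rw [Complex.exp_sub, aux_art]
  field_simp

lemma aux_psi2 (ζ : ℂ) (hζ : ζ ^ 2 ≠ Complex.I) (x : ℝ) : ψb₂Ex ζ x =
    -6 * ζ * (Complex.exp (-Complex.I * ζ ^ 2 * x) * Complex.exp (4 * x))
    / ((ζ ^ 2 - Complex.I) * (2 + 3 * Complex.I * Complex.exp (6 * x))) := by
  have hA := aux_A x
  have hB := aux_B x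
  have hA2 : 4 - Complex.I * 3 * Complex.exp (6 * x) ≠ 0 := by rwa [mul_comm Complex.I 3]
  have hB2 : 2 + Complex.I * 3 * Complex.exp (6 * x) ≠ 0 := by rwa [mul_comm Complex.I 3]
  have hz := sub_ne_zero.mpr hζ
  unfold ψb₂Ex
  rw [Complex.exp_add, Complex.exp_add, aux_art,
    show -4 + 3 * Complex.I * Complex.exp (6 * x)
      = -(4 - 3 * Complex.I * Complex.exp (6 * x)) by ring]
  field_simp

lemma aux_q (x : ℝ) : qEx x = 18 * Complex.I * Complex.exp (2 * x) *
    (2 + 3 * Complex.I * Complex.exp (6 * x)) / (4 - 3 * Complex.I * Complex.exp (6 * x)) ^ 2 := by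
  have hA := aux_A x
  have hB := aux_B x
  have hA2 : 4 - Complex.I * 3 * Complex.exp (6 * x) ≠ 0 := by rwa [mul_comm Complex.I 3]
  have hB2 : 2 + Complex.I * 3 * Complex.exp (6 * x) ≠ 0 := by rwa [mul_comm Complex.I 3]
  unfold qEx
  rw [show ∀ a : ℂ, 2 * (x : ℂ) - 4 * a = 2 * x - (2 * a + 2 * a) by intro a; ring,
    Complex.exp_sub, Complex.exp_add, aux_art,
    show 3 * Complex.exp (6 * x) - 2 * Complex.I
      = -Complex.I * (2 + 3 * Complex.I * Complex.exp (6 * x)) by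
        linear_combination 3 * Complex.exp (6 * x) * Complex.I_sq]
  have hI := Complex.I_ne_zero
  field_simp
  linear_combination -Complex.I_sq

lemma aux_r (x : ℝ) : rEx x = -12 * Complex.I * Complex.exp (4 * x) *
    (4 - 3 * Complex.I * Complex.exp (6 * x)) / (2 + 3 * Complex.I * Complex.exp (6 * x)) ^ 2 := by
  have hA := aux_A x
  have hB := aux_B x
  have hA2 : 4 - Complex.I * 3 * Complex.exp (6 * x) ≠ 0 := by rwa [mul_comm Complex.I 3]
  have hB2 : 2 + Complex.I * 3 * Complex.exp (6 * x) ≠ 0 := by rwa [mul_comm Complex.I 3]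
  unfold rEx
  rw [show ∀ a : ℂ, 4 * (x : ℂ) + 4 * a = 4 * x + (2 * a + 2 * a) by intro a; ring,
    Complex.exp_add, Complex.exp_add, aux_art,
    show 3 * Complex.exp (6 * x) + 4 * Complex.I
      = Complex.I * (4 - 3 * Complex.I * Complex.exp (6 * x)) by
        linear_combination 3 * Complex.exp (6 * x) * Complex.I_sq]
  have hI := Complex.I_ne_zero
  field_simp
  linear_combination Complex.I_sq

lemma aux_exp (c : ℂ) (x : ℝ) : HasDerivAt (fun x : ℝ => Complex.exp (c * x))
    (c * Complex.exp (c * x)) x := by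
  have h := ((Complex.ofRealCLM.hasDerivAt (x := x)).const_mul c).cexp
  simpa [mul_comm] using h

/-- Example 6.3: the pair (ψ̄₁, ψ̄₂) solves system (1.1) with potentials qEx, rEx. -/
theorem example63_psibar_solves
    (ζ : ℂ) (hζ : ζ ^ 2 ≠ Complex.I) :
    ∀ x : ℝ,
      HasDerivAt (fun x => ψb₁Ex ζ x)
        (-Complex.I * ζ ^ 2 * ψb₁Ex ζ x + ζ * qEx x * ψb₂Ex ζ x) x ∧
      HasDerivAt (fun x => ψb₂Ex ζ x)
        (ζ * rEx x * ψb₁Ex ζ x + Complex.I * ζ ^ 2 * ψb₂Ex ζ x) x := by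
  intro x
  have hA := aux_A x
  have hB := aux_B x
  have hA2 : 4 - Complex.I * 3 * Complex.exp (6 * x) ≠ 0 := by rwa [mul_comm Complex.I 3]
  have hB2 : 2 + Complex.I * 3 * Complex.exp (6 * x) ≠ 0 := by rwa [mul_comm Complex.I 3]
  have hz := sub_ne_zero.mpr hζ
  have hE := aux_exp 6 x
  have h4 := aux_exp 4 x
  have he := aux_exp (-Complex.I * ζ ^ 2) x
  have e6 : Complex.exp (6 * x) = Complex.exp (2 * x) * Complex.exp (4 * x) := by
    rw [← Complex.exp_add]; ring_nf
  have hEA := hE.const_mul (3 * Complex.I)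
  constructor
  · rw [show (fun x => ψb₁Ex ζ x) = _ from funext (aux_psi1 ζ hζ)]
    have h := (((hEA.mul_const (ζ ^ 2 - Complex.I)).const_sub
      (-2 * (ζ ^ 2 + 2 * Complex.I))).mul he).div
      ((hEA.const_sub 4).const_mul (ζ ^ 2 - Complex.I)) (mul_ne_zero hz hA)
    refine h.congr_deriv ?_
    rw [aux_psi1 ζ hζ, aux_psi2 ζ hζ, aux_q]
    simp only [Pi.mul_apply]
    clear h he
    generalize Complex.exp (-Complex.I * ζ ^ 2 * x) = e
    field_simp
    rw [e6]
    ring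
  · rw [show (fun x => ψb₂Ex ζ x) = _ from funext (aux_psi2 ζ hζ)]
    have h := ((he.mul h4).const_mul (-6 * ζ)).div
      ((hEA.const_add 2).const_mul (ζ ^ 2 - Complex.I)) (mul_ne_zero hz hB)
    refine h.congr_deriv ?_
    rw [aux_psi1 ζ hζ, aux_psi2 ζ hζ, aux_r]
    simp only [Pi.mul_apply]
    field_simp
    ring_nf
    simp only [Complex.I_sq, Complex.I_pow_three]
    ring_nf
end
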